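/- arXiv:2205.00386 — 6 statements merged into one kernel-verified Lean document; each statement's English description precedes it below -/
import Mathlib

section
/- Let p : E ⥤ B be a cocartesian fibration of categories. A morphism f : x ⟶ y of E is vertical (i.e. p f is an isomorphism) if and only if f has the right lifting property against every cocartesian morphism: for every cocartesian morphism f' : x' ⟶ y' of E and all morphisms g' : x' ⟶ x and g : y' ⟶ y with f ∘ g' = g ∘ f', there exists a morphism h : y' ⟶ x with h ∘ f' = g' and f ∘ h = g. -/
open CategoryTheory CategoryTheory.Limits

namespace MoensPaper

variable {E : Type*} [Category E] {B : Type*} [Category B]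

/-- A morphism `φ` of `E` is (strongly) cocartesian over `p`. -/
def IsCocart (p : E ⥤ B) {x y : E} (φ : x ⟶ y) : Prop :=
  ∀ {z : E} (ψ : x ⟶ z) (v : p.obj y ⟶ p.obj z),
    p.map ψ = p.map φ ≫ v → ∃! τ : y ⟶ z, p.map τ = v ∧ φ ≫ τ = ψ

/-- A morphism `φ` of `E` is (strongly) cartesian over `p`. -/
def IsCart (p : E ⥤ B) {x y : E} (φ : x ⟶ y) : Prop :=
  ∀ {z : E} (ψ : z ⟶ y) (v : p.obj z ⟶ p.obj x),
    p.map ψ = v ≫ p.map φ → ∃! τ : z ⟶ x, p.map τ = v ∧ τ ≫ φ = ψ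

/-- `p` is a cocartesian fibration (Grothendieck opfibration): every morphism of `B`
with domain `p.obj x` admits a cocartesian lift with source `x`. -/
def IsCocartFib (p : E ⥤ B) : Prop :=
  ∀ (x : E) (b : B) (u : p.obj x ⟶ b),
    ∃ (y : E) (φ : x ⟶ y) (h : p.obj y = b),
      IsCocart p φ ∧ p.map φ = u ≫ eqToHom h.symm

/-- `p` is a cartesian fibration (Grothendieck fibration): every morphism of `B`
with codomain `p.obj y` admits a cartesian lift with target `y`. -/
def IsCartFib (p : E ⥤ B) : Prop :=
  ∀ (y : E) (b : B) (u : b ⟶ p.obj y),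
    ∃ (x : E) (φ : x ⟶ y) (h : p.obj x = b),
      IsCart p φ ∧ p.map φ = eqToHom h ≫ u

/-- In a cocartesian fibration, a morphism is vertical iff it has the
right lifting property against every cocartesian morphism. -/
theorem stmt_0 (p : E ⥤ B) (hp : IsCocartFib p) {x y : E} (f : x ⟶ y) :
    IsIso (p.map f) ↔
      ∀ ⦃x' y' : E⦄ (f' : x' ⟶ y'), IsCocart p f' →
        ∀ (g' : x' ⟶ x) (g : y' ⟶ y), g' ≫ f = f' ≫ g →
          ∃ h : y' ⟶ x, f' ≫ h = g' ∧ h ≫ f = g := by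
  constructor
  · intro hf x' y' f' hf' g' g hg
    have e : p.map g' ≫ p.map f = p.map f' ≫ p.map g := by
      rw [← p.map_comp, hg, p.map_comp]
    obtain ⟨h, ⟨h1, h2⟩, -⟩ := hf' g' (p.map g ≫ inv (p.map f)) (by
      rw [← Category.assoc, ← e]; simp)
    refine ⟨h, h2, ?_⟩
    refine (hf' (f' ≫ g) (p.map g) (p.map_comp _ _)).unique ⟨?_, ?_⟩ ⟨rfl, rfl⟩
    · rw [p.map_comp, h1]; simp
    · rw [← Category.assoc, h2, hg]
  · intro H
    obtain ⟨y₀, φ, e, hφ, hm⟩ := hp x _ (p.map f)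
    obtain ⟨g, ⟨g1, g2⟩, -⟩ := hφ f (eqToHom e) (by rw [hm]; simp)
    obtain ⟨h, h1, h2⟩ := H φ hφ (𝟙 x) g (by rw [g2, Category.id_comp])
    refine ⟨eqToHom e.symm ≫ p.map h, ?_, ?_⟩
    · rw [← Category.assoc, ← hm, ← p.map_comp, h1, p.map_id]
    · rw [Category.assoc, ← p.map_comp, h2, g1]; simp

end MoensPaper
end

section
/- Let p : E ⥤ B be a cocartesian fibration of categories. Vertical morphisms are stable under pullback: if f : x ⟶ y is a vertical morphism of E (i.e. p f is an isomorphism), g : y' ⟶ y is any morphism of E, and a pullback square in E of f along g exists, with projections f' : x' ⟶ y' and g' : x' ⟶ x, then f' is vertical (p f' is an isomorphism). -/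
open CategoryTheory CategoryTheory.Limits

namespace MoensPaper

variable {E : Type*} [Category E] {B : Type*} [Category B]

/-- In a cocartesian fibration, vertical morphisms are stable under
pullback. -/
theorem stmt_1 (p : E ⥤ B) (hp : IsCocartFib p) {x y y' x' : E}
    (f : x ⟶ y) (hf : IsIso (p.map f)) (g : y' ⟶ y)
    (f' : x' ⟶ y') (g' : x' ⟶ x)
    (hpb : IsPullback g' f' f g) :
    IsIso (p.map f') := by
  obtain ⟨w, φ, h, hφ, hu⟩ := hp x' (p.obj y') (p.map f')
  have h1 : p.map f' = p.map φ ≫ eqToHom h := by simp [hu]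
  obtain ⟨m, ⟨hm, hm'⟩, -⟩ := hφ f' (eqToHom h) h1
  have hsq : p.map g' ≫ p.map f = p.map f' ≫ p.map g := by
    rw [← p.map_comp, ← p.map_comp, hpb.w]
  have h2 : p.map g' = p.map φ ≫ (eqToHom h ≫ p.map g ≫ inv (p.map f)) := by
    rw [← cancel_mono (p.map f), hsq, h1]
    simp
  obtain ⟨k, ⟨hk, hk'⟩, -⟩ := hφ g' _ h2
  have hkm : k ≫ f = m ≫ g := by
    refine (hφ (f' ≫ g) (eqToHom h ≫ p.map g) ?_).unique ⟨?_, ?_⟩ ⟨?_, ?_⟩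
    · rw [p.map_comp, h1, Category.assoc]
    · rw [p.map_comp, hk]
      simp
    · rw [← Category.assoc, hk', hpb.w]
    · rw [p.map_comp, hm]
    · rw [← Category.assoc, hm']
  have hs : φ ≫ hpb.lift k m hkm = 𝟙 x' := by
    apply hpb.hom_ext
    · simp [hk']
    · simp [hm']
  refine ⟨eqToHom h.symm ≫ p.map (hpb.lift k m hkm), ?_, ?_⟩
  · rw [← Category.assoc, ← hu, ← p.map_comp, hs, p.map_id]
  · rw [Category.assoc, ← p.map_comp, hpb.lift_snd, hm]
    simp

end MoensPaper
end

section
/- Let p : E ⥤ B be a cartesian fibration of categories. Any commutative square in E which lies over a pullback square in B and all four of whose edges are cartesian morphisms is itself a pullback square in E. -/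
open CategoryTheory CategoryTheory.Limits

namespace MoensPaper

variable {E : Type*} [Category E] {B : Type*} [Category B]

/-- In a cartesian fibration, a commutative square lying over a pullback
square in the base, all four of whose edges are cartesian, is a pullback square. -/
theorem stmt_4 (p : E ⥤ B) (hp : IsCartFib p)
    {P X Y Z : E} (fst : P ⟶ X) (snd : P ⟶ Y) (f : X ⟶ Z) (g : Y ⟶ Z)
    (w : fst ≫ f = snd ≫ g)
    (hover : IsPullback (p.map fst) (p.map snd) (p.map f) (p.map g))
    (h₁ : IsCart p fst) (h₂ : IsCart p snd) (h₃ : IsCart p f) (h₄ : IsCart p g) :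
    IsPullback fst snd f g := by
  have key : ∀ s : PullbackCone f g, ∃ τ : s.pt ⟶ P, τ ≫ fst = s.fst ∧ τ ≫ snd = s.snd := by
    intro s
    have hw : p.map s.fst ≫ p.map f = p.map s.snd ≫ p.map g := by
      rw [← p.map_comp, ← p.map_comp, s.condition]
    obtain ⟨τ, ⟨hτ, hτ₁⟩, -⟩ := h₁ s.fst (hover.lift _ _ hw) (hover.lift_fst _ _ hw).symm
    refine ⟨τ, hτ₁, ?_⟩
    refine (h₄ (s.snd ≫ g) (p.map s.snd) (p.map_comp _ _)).unique ⟨?_, ?_⟩ ⟨rfl, rfl⟩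
    · rw [p.map_comp, hτ, hover.lift_snd]
    · rw [Category.assoc, ← w, ← Category.assoc, hτ₁, s.condition]
  choose l hl₁ hl₂ using key
  refine ⟨⟨w⟩, ⟨PullbackCone.IsLimit.mk w l hl₁ hl₂ ?_⟩⟩
  intro s m hm₁ hm₂
  refine (h₁ s.fst (p.map (l s)) (by rw [← p.map_comp, hl₁])).unique ⟨?_, hm₁⟩ ⟨rfl, hl₁ s⟩
  apply hover.hom_ext
  · rw [← p.map_comp, ← p.map_comp, hm₁, hl₁]
  · rw [← p.map_comp, ← p.map_comp, hm₂, hl₂]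

end MoensPaper
end

section
/- Let p : E ⥤ B be a cartesian fibration of categories. Any commutative square in E whose two parallel edges f' : e''' ⟶ e'' and f : e' ⟶ e are cartesian morphisms and whose other two edges g : e''' ⟶ e' and g' : e'' ⟶ e are vertical (their images under p are isomorphisms) is a pullback square in E. -/
open CategoryTheory CategoryTheory.Limits

namespace MoensPaper

variable {E : Type*} [Category E] {B : Type*} [Category B]

/-- In a cartesian fibration, a commutative square whose two parallel
edges `f'`, `f` are cartesian and whose other two edges `g`, `g'` are vertical is a
pullback square. -/
theorem stmt_5 (p : E ⥤ B) (hp : IsCartFib p)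
    {e''' e'' e' e : E} (f' : e''' ⟶ e'') (f : e' ⟶ e)
    (g : e''' ⟶ e') (g' : e'' ⟶ e)
    (hf' : IsCart p f') (hf : IsCart p f)
    (hg : IsIso (p.map g)) (hg' : IsIso (p.map g'))
    (w : f' ≫ g' = g ≫ f) :
    IsPullback f' g g' f := by
  have key : ∀ {z : E} (a : z ⟶ e'') (b : z ⟶ e'), a ≫ g' = b ≫ f →
      ∃ t : z ⟶ e''', (t ≫ f' = a ∧ t ≫ g = b) ∧
        ∀ m : z ⟶ e''', m ≫ f' = a → m ≫ g = b → m = t := by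
    intro z a b hab
    have hw : p.map f' ≫ p.map g' = p.map g ≫ p.map f := by
      rw [← p.map_comp, w, p.map_comp]
    have hab' : p.map a ≫ p.map g' = p.map b ≫ p.map f := by
      rw [← p.map_comp, hab, p.map_comp]
    obtain ⟨t, ⟨ht1, ht2⟩, htu⟩ := hf' a (p.map b ≫ inv (p.map g)) (by
      rw [← cancel_mono (p.map g'), hab']
      simp [hw])
    refine ⟨t, ⟨ht2, ?_⟩, ?_⟩
    · refine (hf (b ≫ f) (p.map b) (p.map_comp b f)).unique ⟨?_, ?_⟩ ⟨rfl, rfl⟩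
      · simp [ht1]
      · rw [Category.assoc, ← w, ← Category.assoc, ht2, hab]
    · intro m hm1 hm2
      apply htu
      refine ⟨?_, hm1⟩
      rw [← hm2]
      simp
  refine ⟨⟨w⟩, ⟨PullbackCone.IsLimit.mk w
    (fun s => (key s.fst s.snd s.condition).choose)
    (fun s => (key s.fst s.snd s.condition).choose_spec.1.1)
    (fun s => (key s.fst s.snd s.condition).choose_spec.1.2)
    (fun s m h1 h2 => (key s.fst s.snd s.condition).choose_spec.2 m h1 h2)⟩⟩

end MoensPaper
end

section
/- Let p : E ⥤ B be a bifibration of categories. Then p satisfies the Beck–Chevalley condition if and only if it satisfies the dual Beck–Chevalley condition: for every commutative square in E lying over a pullback square in B, if its top and bottom edges are cocartesian morphisms and its left edge is a cartesian morphism, then its right edge is cartesian. -/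
open CategoryTheory CategoryTheory.Limits

namespace MoensPaper

variable {E : Type*} [Category E] {B : Type*} [Category B]

/-- The Beck–Chevalley condition: for every commutative square in `E` lying over a
pullback square in `B` whose bottom edge is cocartesian and whose two vertical edges
are cartesian, the top edge is cocartesian. -/
def BCC (p : E ⥤ B) : Prop :=
  ∀ {d' e' d e : E} (f' : d' ⟶ e') (g' : d' ⟶ d) (g : e' ⟶ e) (f : d ⟶ e),
    f' ≫ g = g' ≫ f →
    IsPullback (p.map f') (p.map g') (p.map g) (p.map f) →
    IsCocart p f → IsCart p g → IsCart p g' →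
    IsCocart p f'

/-- The dual Beck–Chevalley condition: for every commutative square in `E` lying over a
pullback square in `B` whose top and bottom edges are cocartesian and whose left edge is
cartesian, the right edge is cartesian. -/
def DualBCC (p : E ⥤ B) : Prop :=
  ∀ {d' e' d e : E} (f' : d' ⟶ e') (g' : d' ⟶ d) (g : e' ⟶ e) (f : d ⟶ e),
    f' ≫ g = g' ≫ f →
    IsPullback (p.map f') (p.map g') (p.map g) (p.map f) →
    IsCocart p f' → IsCocart p f → IsCart p g' →
    IsCart p g

theorem IsCart.hom_ext {p : E ⥤ B} {x y z : E} {φ : x ⟶ y} (h : IsCart p φ) {a b : z ⟶ x}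
    (h1 : p.map a = p.map b) (h2 : a ≫ φ = b ≫ φ) : a = b :=
  (h (b ≫ φ) (p.map b) (by simp)).unique ⟨h1, h2⟩ ⟨rfl, rfl⟩

theorem IsCocart.hom_ext {p : E ⥤ B} {x y z : E} {φ : x ⟶ y} (h : IsCocart p φ) {a b : y ⟶ z}
    (h1 : p.map a = p.map b) (h2 : φ ≫ a = φ ≫ b) : a = b :=
  (h (φ ≫ b) (p.map b) (by simp)).unique ⟨h1, h2⟩ ⟨rfl, rfl⟩

theorem IsCart.iso_comp {p : E ⥤ B} {w x y : E} {φ : x ⟶ y} (h : IsCart p φ) (k : w ≅ x) :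
    IsCart p (k.hom ≫ φ) := by
  intro z ψ v hv
  obtain ⟨τ, ⟨h1, h2⟩, -⟩ := h ψ (v ≫ p.map k.hom) (by simpa using hv)
  refine ⟨τ ≫ k.inv, ⟨?_, by simpa using h2⟩, ?_⟩
  · rw [p.map_comp, h1, Category.assoc, ← p.map_comp, k.hom_inv_id, p.map_id, Category.comp_id]
  · rintro σ ⟨h3, h4⟩
    rw [Iso.eq_comp_inv]
    exact h.hom_ext (by rw [p.map_comp, h3, h1]) (by rw [Category.assoc, h4, h2])

theorem IsCocart.comp_iso {p : E ⥤ B} {w x y : E} {φ : x ⟶ y} (h : IsCocart p φ) (k : y ≅ w) :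
    IsCocart p (φ ≫ k.hom) := by
  intro z ψ v hv
  obtain ⟨τ, ⟨h1, h2⟩, -⟩ := h ψ (p.map k.hom ≫ v) (by simpa using hv)
  refine ⟨k.inv ≫ τ, ⟨?_, by simpa using h2⟩, ?_⟩
  · rw [p.map_comp, h1, ← Category.assoc, ← p.map_comp, k.inv_hom_id, p.map_id, Category.id_comp]
  · rintro σ ⟨h3, h4⟩
    rw [Iso.eq_inv_comp]
    exact h.hom_ext (by rw [p.map_comp, h3, h1]) (by rw [← Category.assoc, h4, h2])

theorem IsCartFib.lift {p : E ⥤ B} (h : IsCartFib p) (y : E) (b : B) (u : b ⟶ p.obj y) :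
    ∃ (x : E) (φ : x ⟶ y) (i : p.obj x ≅ b), IsCart p φ ∧ p.map φ = i.hom ≫ u := by
  obtain ⟨x, φ, e, h1, h2⟩ := h y b u
  exact ⟨x, φ, eqToIso e, h1, h2⟩

theorem IsCocartFib.lift {p : E ⥤ B} (h : IsCocartFib p) (x : E) (b : B) (u : p.obj x ⟶ b) :
    ∃ (y : E) (φ : x ⟶ y) (i : b ≅ p.obj y), IsCocart p φ ∧ p.map φ = u ≫ i.hom := by
  obtain ⟨y, φ, e, h1, h2⟩ := h x b u
  exact ⟨y, φ, eqToIso e.symm, h1, h2⟩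

/-- A bifibration satisfies the Beck–Chevalley condition iff it satisfies
the dual Beck–Chevalley condition. -/
theorem stmt_8 (p : E ⥤ B) (hcart : IsCartFib p) (hcocart : IsCocartFib p) :
    BCC p ↔ DualBCC p := by
  constructor
  · intro H d' e' d e f' g' g f comm pb hf' hf hg'
    obtain ⟨w, h, i, hh, hi⟩ := hcart.lift e _ (p.map g)
    obtain ⟨k, ⟨hk1, hk2⟩, -⟩ := hh g i.inv (by simp [hi])
    have hc : IsCocart p (f' ≫ k) := by
      refine H (f' ≫ k) g' h f (by rw [Category.assoc, hk2, comm]) ?_ hf hh hg'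
      refine IsPullback.of_iso pb (Iso.refl _) i.symm (Iso.refl _) (Iso.refl _) ?_ ?_ ?_ ?_ <;>
        simp [hk1, hi]
    obtain ⟨l, ⟨hl1, hl2⟩, -⟩ := hc f' i.hom (by simp [hk1])
    rw [Category.assoc] at hl2
    have a : k ≫ l = 𝟙 _ := hf'.hom_ext (by simp [hk1, hl1]) (by simpa using hl2)
    have b : l ≫ k = 𝟙 _ := hc.hom_ext (by simp [hk1, hl1]) (by simp [reassoc_of% a])
    rw [← hk2]
    intro z
    exact hh.iso_comp ⟨k, l, a, b⟩
  · intro H d' e' d e f' g' g f comm pb hf hg hg'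
    obtain ⟨w, h, i, hh, hi⟩ := hcocart.lift d' _ (p.map f')
    obtain ⟨k, ⟨hk1, hk2⟩, -⟩ := hh f' i.inv (by simp [hi])
    have hc : IsCart p (k ≫ g) := by
      refine H h g' (k ≫ g) f (by rw [← Category.assoc, hk2, comm]) ?_ hh hf hg'
      refine IsPullback.of_iso pb (Iso.refl _) i (Iso.refl _) (Iso.refl _) ?_ ?_ ?_ ?_ <;>
        simp [hk1, hi]
    obtain ⟨l, ⟨hl1, hl2⟩, -⟩ := hc g i.hom (by simp [hk1])
    have a : l ≫ k = 𝟙 _ := hg.hom_ext (by simp [hk1, hl1]) (by simpa using hl2)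
    have b : k ≫ l = 𝟙 _ := hc.hom_ext (by simp [hk1, hl1]) (by simp [reassoc_of% a])
    rw [← hk2]
    intro z
    exact hh.comp_iso ⟨k, l, b, a⟩

end MoensPaper
end

section
/- Let A and B be categories with all pullbacks and F : A ⥤ B a functor. Let gl(F) : (B ↓ F) ⥤ A be the Artin gluing, i.e. the projection of the comma category with objects (a : A, b : B, v : b ⟶ F a) to A; it is a bifibration. Then the following are equivalent: (i) F preserves pullbacks; (ii) gl(F) satisfies the Beck–Chevalley condition. -/
open CategoryTheory CategoryTheory.Limits

namespace MoensPaper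

variable {E : Type*} [Category E] {B : Type*} [Category B]

section Helpers

variable {A : Type*} [Category A] {C : Type*} [Category C] (F : A ⥤ C)

theorem isCocart_iff {x y : Comma (𝟭 C) F} (φ : x ⟶ y) :
    IsCocart (Comma.snd (𝟭 C) F) φ ↔ IsIso φ.left := by
  constructor
  · intro h
    let z : Comma (𝟭 C) F := ⟨x.left, y.right, x.hom ≫ F.map φ.right⟩
    let ψ : x ⟶ z := { left := 𝟙 _, right := φ.right, w := by simp [z] }
    obtain ⟨τ, ⟨h1, h2⟩, -⟩ := h ψ (𝟙 _) (by simp [ψ, z])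
    have e1 : φ.left ≫ τ.left = 𝟙 _ := congrArg CommaMorphism.left h2
    have h1' : τ.right = 𝟙 _ := h1
    have w : φ.left ≫ y.hom = x.hom ≫ F.map φ.right := φ.w
    let σ : z ⟶ y := { left := φ.left, right := 𝟙 _, w := by simpa [z] using w }
    obtain ⟨ρ, -, hu⟩ := h φ (𝟙 _) (by simp)
    have a1 := hu (𝟙 y) ⟨rfl, by simp⟩
    have a2 := hu (τ ≫ σ) ⟨by
        change τ.right ≫ 𝟙 _ = 𝟙 _
        rw [h1']; exact Category.comp_id _, by
        rw [← Category.assoc, h2]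
        apply CommaMorphism.ext
        · exact Category.id_comp _
        · exact Category.comp_id _⟩
    have e2 : τ.left ≫ φ.left = 𝟙 _ := congrArg CommaMorphism.left (a2.trans a1.symm)
    exact ⟨τ.left, e1, e2⟩
  · intro h z ψ v hv
    have hv' : ψ.right = φ.right ≫ v := hv
    have w : φ.left ≫ y.hom = x.hom ≫ F.map φ.right := φ.w
    have w' : ψ.left ≫ z.hom = x.hom ≫ F.map ψ.right := ψ.w
    let l : y.left ⟶ z.left := inv φ.left ≫ ψ.left
    have hl : l ≫ z.hom = y.hom ≫ F.map v := by
      rw [← cancel_epi φ.left]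
      calc φ.left ≫ l ≫ z.hom = ψ.left ≫ z.hom := by
            simp only [l, Category.assoc, IsIso.hom_inv_id_assoc]
        _ = (x.hom ≫ F.map φ.right) ≫ F.map v := by
            rw [w', hv', Category.assoc]
            exact congrArg (x.hom ≫ ·) (F.map_comp _ _)
        _ = φ.left ≫ y.hom ≫ F.map v := by
            rw [← w]; exact Category.assoc _ _ _
    refine ⟨{ left := l, right := v, w := hl }, ⟨rfl, ?_⟩, ?_⟩
    · apply CommaMorphism.ext
      · exact IsIso.hom_inv_id_assoc _ _
      · exact hv'.symm
    · rintro τ ⟨h1, h2⟩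
      apply CommaMorphism.ext
      · have e1 : φ.left ≫ τ.left = ψ.left := congrArg CommaMorphism.left h2
        exact (IsIso.eq_inv_comp _).2 e1
      · exact h1

theorem isCart_iff {x y : Comma (𝟭 C) F} (φ : x ⟶ y) :
    IsCart (Comma.snd (𝟭 C) F) φ ↔
      IsPullback (Z := F.obj y.right) φ.left x.hom y.hom (F.map φ.right) := by
  have w : φ.left ≫ y.hom = x.hom ≫ F.map φ.right := φ.w
  constructor
  · intro h
    have key : ∀ s : PullbackCone (Z := F.obj y.right) y.hom (F.map φ.right),
        ∃! l : s.pt ⟶ x.left, l ≫ φ.left = s.fst ∧ l ≫ x.hom = s.snd := by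
      intro s
      have hs : s.fst ≫ y.hom = s.snd ≫ F.map φ.right := s.condition
      let z : Comma (𝟭 C) F := ⟨s.pt, x.right, s.snd⟩
      let ψ : z ⟶ y := { left := s.fst, right := φ.right, w := hs }
      obtain ⟨τ, ⟨h1, h2⟩, hu⟩ := h ψ (𝟙 _) (by simp [ψ, z])
      have h1' : τ.right = 𝟙 _ := h1
      have tw : τ.left ≫ x.hom = s.snd ≫ F.map τ.right := τ.w
      refine ⟨τ.left, ⟨congrArg CommaMorphism.left h2, ?_⟩, ?_⟩
      · rw [tw, h1']
        exact (congrArg (s.snd ≫ ·) (F.map_id _)).trans (Category.comp_id _)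
      · rintro l ⟨l1, l2⟩
        have hw : l ≫ x.hom = s.snd ≫ F.map (𝟙 x.right) :=
          l2.trans ((congrArg (s.snd ≫ ·) (F.map_id _)).trans (Category.comp_id _)).symm
        let σ : z ⟶ x := { left := l, right := 𝟙 _, w := hw }
        have := hu σ ⟨rfl, by
          apply CommaMorphism.ext
          · exact l1
          · exact Category.id_comp _⟩
        exact congrArg CommaMorphism.left this
    refine ⟨⟨w⟩, ⟨PullbackCone.IsLimit.mk w ?_ ?_ ?_ ?_⟩⟩
    · exact fun s => (key s).choose
    · exact fun s => (key s).choose_spec.1.1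
    · exact fun s => (key s).choose_spec.1.2
    · exact fun s m h1 h2 => (key s).choose_spec.2 m ⟨h1, h2⟩
  · intro h z ψ v hv
    have hv' : ψ.right = v ≫ φ.right := hv
    have w' : ψ.left ≫ y.hom = z.hom ≫ F.map ψ.right := ψ.w
    have hc : ψ.left ≫ y.hom = (z.hom ≫ F.map v) ≫ F.map φ.right := by
      rw [w', hv', F.map_comp, Category.assoc]
    refine ⟨{ left := h.lift _ _ hc, right := v, w := h.lift_snd _ _ hc }, ⟨rfl, ?_⟩, ?_⟩
    · apply CommaMorphism.ext
      · exact h.lift_fst _ _ hc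
      · exact hv'.symm
    · rintro τ ⟨h1, h2⟩
      have h1' : τ.right = v := h1
      have tw : τ.left ≫ x.hom = z.hom ≫ F.map τ.right := τ.w
      apply CommaMorphism.ext
      · apply h.hom_ext
        · exact (congrArg CommaMorphism.left h2).trans (h.lift_fst _ _ hc).symm
        · refine Eq.trans ?_ (h.lift_snd _ _ hc).symm
          rw [tw, h1']
      · exact h1

end Helpers

/-- For categories `A`, `B` with pullbacks and `F : A ⥤ B`, the Artin
gluing `gl(F) : (B ↓ F) ⥤ A` is a bifibration, and `F` preserves pullbacks iff
`gl(F)` satisfies the Beck–Chevalley condition. -/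
theorem stmt_10 {A : Type*} [Category A] {B : Type*} [Category B]
    [HasPullbacks A] [HasPullbacks B] (F : A ⥤ B) :
    (IsCartFib (Comma.snd (𝟭 B) F) ∧ IsCocartFib (Comma.snd (𝟭 B) F)) ∧
    ((∀ {P X Y Z : A} (fst : P ⟶ X) (snd : P ⟶ Y) (f : X ⟶ Z) (g : Y ⟶ Z),
        IsPullback fst snd f g →
        IsPullback (F.map fst) (F.map snd) (F.map f) (F.map g)) ↔
      BCC (Comma.snd (𝟭 B) F)) := by
  refine ⟨⟨?_, ?_⟩, ?_, ?_⟩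
  · intro y b u
    let u' : b ⟶ y.right := u
    let x : Comma (𝟭 B) F :=
      ⟨pullback (Z := F.obj y.right) y.hom (F.map u'), b, pullback.snd _ _⟩
    let φ : x ⟶ y := { left := pullback.fst _ _, right := u', w := pullback.condition }
    refine ⟨x, φ, rfl, (isCart_iff F φ).2 (IsPullback.of_hasPullback _ _), ?_⟩
    exact (Category.id_comp _).symm
  · intro x b u
    let u' : x.right ⟶ b := u
    let y : Comma (𝟭 B) F := ⟨x.left, b, x.hom ≫ F.map u'⟩
    let φ : x ⟶ y := { left := 𝟙 _, right := u', w := Category.id_comp _ }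
    refine ⟨y, φ, rfl, (isCocart_iff F φ).2 (inferInstanceAs (IsIso (𝟙 x.left))), ?_⟩
    exact (Category.comp_id _).symm
  · intro hF d' e' d e f' g' g f hsq hpb hf hg hg'
    rw [isCocart_iff] at hf ⊢
    rw [isCart_iff] at hg hg'
    have hb := hF _ _ _ _ hpb
    have wf : f.left ≫ e.hom = d.hom ≫ F.map f.right := f.w
    have wf' : f'.left ≫ e'.hom = d'.hom ≫ F.map f'.right := f'.w
    have hl : f'.left ≫ g.left = g'.left ≫ f.left := congrArg CommaMorphism.left hsq
    have h1 := hg'.paste_vert hb.flip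
    have h2 : IsPullback (Z := F.obj e.right) g'.left (f'.left ≫ e'.hom) (f.left ≫ e.hom)
        (F.map g.right) := by
      rw [wf, wf']; exact h1
    exact (IsPullback.of_bot h2 hl.symm hg).isIso_snd_of_isIso hf
  · intro h P X Y Z fst snd f g hp
    let d : Comma (𝟭 B) F := ⟨F.obj Y, Y, 𝟙 _⟩
    let e : Comma (𝟭 B) F := ⟨F.obj Y, Z, F.map g⟩
    let e' : Comma (𝟭 B) F := ⟨pullback (F.map g) (F.map f), X, pullback.snd _ _⟩
    let d' : Comma (𝟭 B) F := ⟨F.obj P, P, 𝟙 _⟩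
    have hc : F.map snd ≫ F.map g = F.map fst ≫ F.map f := by
      rw [← F.map_comp, ← F.map_comp, hp.w]
    let l : F.obj P ⟶ pullback (F.map g) (F.map f) := pullback.lift _ _ hc
    let f₁ : d ⟶ e := { left := 𝟙 _, right := g, w := rfl }
    let g₁ : e' ⟶ e := { left := pullback.fst _ _, right := f, w := pullback.condition }
    let g₂ : d' ⟶ d := { left := F.map snd, right := snd, w := by simp [d, d'] }
    let f₂ : d' ⟶ e' := { left := l, right := fst, w := (pullback.lift_snd _ _ hc).trans (Category.id_comp _).symm }
    have hi : IsCocart (Comma.snd (𝟭 B) F) f₂ := h f₂ g₂ g₁ f₁ (by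
        apply CommaMorphism.ext
        · exact (pullback.lift_fst _ _ hc).trans (Category.comp_id _).symm
        · exact hp.w) hp
      ((isCocart_iff F f₁).2 (inferInstanceAs (IsIso (𝟙 (F.obj Y)))))
      ((isCart_iff F g₁).2 (IsPullback.of_hasPullback _ _))
      ((isCart_iff F g₂).2 (IsPullback.of_vert_isIso_mono (snd := 𝟙 (F.obj P)) (f := 𝟙 (F.obj Y)) ⟨by simp [d, d', g₂]⟩))
    rw [isCocart_iff] at hi
    have hi' : IsIso l := hi
    refine IsPullback.flip (IsPullback.of_iso_pullback ⟨hc⟩ (asIso l) ?_ ?_)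
    · exact pullback.lift_fst _ _ hc
    · exact pullback.lift_snd _ _ hc

end MoensPaper
end
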